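/- Let L be a logic with a formula S such that {S} is L-consistent and there exists w ⊆ Fml_L with w ⊬_L S, and consider the privacy configuration (KB, AK, Sec) with KB := {S}, AK := ∅, Sec := {S}, and the constant query sequence q := (S, S, S, …). Then for any continuous, truthful, and effective censor Cens, the answer sequence Cens_PK(q) is constantly r, i.e., Cens_PK(q)_i = r for all i ∈ ω. -/

import Mathlib

/-- A logic: a set (type) of formulas with a consequence relation satisfying
reflexivity, weakening and transitivity (cut). -/
structure Logic where
  Fml : Type
  Proves : Set Fml → Fml → Prop
  refl : ∀ A : Fml, Proves {A} A
  weaken : ∀ (Γ Δ : Set Fml) (A : Fml), Proves Γ A → Proves (Γ ∪ Δ) A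
  cut : ∀ (Γ Δ : Set Fml) (C A : Fml),
    Proves Γ C → Proves (Δ ∪ {C}) A → Proves (Γ ∪ Δ) A

/-- Modal formulas over a logic `L`: boxed `L`-formulas, falsum, implication. -/
inductive MFml (L : Logic) : Type where
  | box : L.Fml → MFml L
  | bot : MFml L
  | imp : MFml L → MFml L → MFml L

/-- ¬A := A → ⊥ -/
def MFml.neg {L : Logic} (A : MFml L) : MFml L := MFml.imp A MFml.bot

/-- ⊤ := ⊥ → ⊥ -/
def MFml.top {L : Logic} : MFml L := MFml.imp MFml.bot MFml.bot

/-- A ∨ B := ¬A → B -/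
def MFml.or {L : Logic} (A B : MFml L) : MFml L := MFml.imp (MFml.neg A) B

/-- An M-model is a set of sets of `L`-formulas. -/
abbrev MModel (L : Logic) := Set (Set L.Fml)

/-- Truth of a modal formula in an M-model. -/
def Sat {L : Logic} (M : MModel L) : MFml L → Prop
  | MFml.box A => ∀ w ∈ M, L.Proves w A
  | MFml.bot => False
  | MFml.imp A B => Sat M A → Sat M B

/-- `M ⊩ Γ`. -/
def SatSet {L : Logic} (M : MModel L) (Γ : Set (MFml L)) : Prop :=
  ∀ A ∈ Γ, Sat M A

/-- Γ is satisfiable. -/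
def Satisfiable {L : Logic} (Γ : Set (MFml L)) : Prop :=
  ∃ M : MModel L, SatSet M Γ

/-- Γ ⊨ A. -/
def Entails {L : Logic} (Γ : Set (MFml L)) (A : MFml L) : Prop :=
  ∀ M : MModel L, SatSet M Γ → Sat M A

/-- A privacy configuration (KB, AK, Sec). -/
structure PrivacyConfig (L : Logic) where
  KB : Set L.Fml
  AK : Set (MFml L)
  Sec : Set L.Fml
  consistent : ∃ A : L.Fml, ¬ L.Proves KB A
  truthfulStart : ∀ A ∈ AK, Sat ({KB} : MModel L) A
  hiddenSecrets : ∀ s ∈ Sec, ¬ Entails AK (MFml.box s)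

/-- The answers 𝔸 = {t, u, r}. -/
inductive Ans : Type
  | t | u | r
deriving DecidableEq

open Classical in
/-- eval(KB, q) := t if KB ⊢ q and u otherwise. -/
noncomputable def evalKB (L : Logic) (KB : Set L.Fml) (q : L.Fml) : Ans :=
  if L.Proves KB q then Ans.t else Ans.u

/-- A censor assigns an answering function (on infinite query sequences,
indexed by ℕ) to each privacy configuration. -/
abbrev Censor (L : Logic) := PrivacyConfig L → (ℕ → L.Fml) → (ℕ → Ans)

/-- A censor is continuous iff answers on an initial segment only depend on
the queries in that initial segment. -/
def ContinuousCensor {L : Logic} (Cens : Censor L) : Prop :=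
  ∀ (PK : PrivacyConfig L) (q q' : ℕ → L.Fml) (n : ℕ),
    (∀ i < n, q i = q' i) → ∀ i < n, Cens PK q i = Cens PK q' i

/-- A censor is truthful iff each answer is either the correct evaluation or refusal. -/
def Truthful {L : Logic} (Cens : Censor L) : Prop :=
  ∀ (PK : PrivacyConfig L) (q : ℕ → L.Fml) (i : ℕ),
    Cens PK q i = evalKB L PK.KB (q i) ∨ Cens PK q i = Ans.r

/-- Content of an answer to a query. -/
def contAns {L : Logic} (q : L.Fml) : Ans → MFml L
  | Ans.t => MFml.box q
  | Ans.u => MFml.neg (MFml.box q)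
  | Ans.r => MFml.top

/-- The content of the answers of a censor to a query sequence up to `n`
(0-based: queries with index `< n`), including the a priori knowledge. -/
def cont {L : Logic} (Cens : Censor L) (PK : PrivacyConfig L)
    (q : ℕ → L.Fml) (n : ℕ) : Set (MFml L) :=
  {F | ∃ i < n, F = contAns (q i) (Cens PK q i)} ∪ PK.AK

/-- The full content of a knowledge base. -/
noncomputable def fullContent (L : Logic) (KB : Set L.Fml) : Set (MFml L) :=
  {F | ∃ A : L.Fml, F = contAns A (evalKB L KB A)}

/-- A censor is credible iff the content of its answers is always satisfiable. -/
def Credible {L : Logic} (Cens : Censor L) : Prop :=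
  ∀ (PK : PrivacyConfig L) (q : ℕ → L.Fml) (n : ℕ), Satisfiable (cont Cens PK q n)

/-- A censor is effective iff the content of its answers never entails a boxed secret. -/
def Effective {L : Logic} (Cens : Censor L) : Prop :=
  ∀ (PK : PrivacyConfig L) (q : ℕ → L.Fml) (n : ℕ),
    ∀ s ∈ PK.Sec, ¬ Entails (cont Cens PK q n) (MFml.box s)

/-- A censor is minimally invasive iff whenever it distorts an answer,
replacing that answer by the correct evaluation (keeping the earlier answers)
would violate effectiveness or credibility. -/
def MinimallyInvasive {L : Logic} (Cens : Censor L) : Prop :=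
  ∀ (PK : PrivacyConfig L) (q : ℕ → L.Fml) (i : ℕ),
    Cens PK q i ≠ evalKB L PK.KB (q i) →
    ∀ Cens' : Censor L,
      (∀ j < i, Cens' PK q j = Cens PK q j) →
      Cens' PK q i = evalKB L PK.KB (q i) →
      ∃ n : ℕ,
        (∃ s ∈ PK.Sec, Entails (cont Cens' PK q n) (MFml.box s)) ∨
        ¬ Satisfiable (cont Cens' PK q n)

/-- A censor is repudiating iff for every privacy configuration and query
sequence there are alternative knowledge bases, not entailing any secret,
producing the same answers on each initial segment. -/
def Repudiating {L : Logic} (Cens : Censor L) : Prop :=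
  ∀ (PK : PrivacyConfig L) (q : ℕ → L.Fml),
    ∃ PKs : ℕ → PrivacyConfig L,
      (∀ i, (PKs i).AK = PK.AK ∧ (PKs i).Sec = PK.Sec) ∧
      (∀ n, ∀ i < n, Cens PK q i = Cens (PKs n) q i) ∧
      (∀ i, ∀ s ∈ PK.Sec, ¬ L.Proves (PKs i).KB s)

/-- A censor is non-refusing iff it never answers `r`. -/
def NonRefusing {L : Logic} (Cens : Censor L) : Prop :=
  ∀ (PK : PrivacyConfig L) (q : ℕ → L.Fml) (i : ℕ), Cens PK q i ≠ Ans.r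

theorem entails_box_of_box_mem {L : Logic} {Γ : Set (MFml L)} {A B : L.Fml}
    (hA : MFml.box A ∈ Γ) (hAB : L.Proves {A} B) : Entails Γ (MFml.box B) := by
  intro M hM w hwM
  have hwA : L.Proves w A := hM (MFml.box A) hA w hwM
  have hcut : L.Proves (w ∪ ∅) B := L.cut w ∅ A B hwA (by rwa [Set.empty_union])
  rwa [Set.union_empty] at hcut

section Censor

variable {L : Logic} {Cens : Censor L} {PK : PrivacyConfig L} {q : ℕ → L.Fml} {i : ℕ}

theorem contAns_mem_cont {n : ℕ} (hi : i < n) :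
    contAns (q i) (Cens PK q i) ∈ cont Cens PK q n :=
  Or.inl ⟨i, hi, rfl⟩

theorem Truthful.eq_t_or_eq_r (htruth : Truthful Cens) (hKB : L.Proves PK.KB (q i)) :
    Cens PK q i = Ans.t ∨ Cens PK q i = Ans.r := by
  have heval : evalKB L PK.KB (q i) = Ans.t := if_pos hKB
  exact heval ▸ htruth PK q i

theorem Effective.ne_t_of_proves_secret (heff : Effective Cens) {s : L.Fml} (hs : s ∈ PK.Sec)
    (hqs : L.Proves {q i} s) : Cens PK q i ≠ Ans.t := by
  intro ht
  have hbox : MFml.box (q i) ∈ cont Cens PK q (i + 1) := by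
    simpa only [ht, contAns] using
      contAns_mem_cont (Cens := Cens) (PK := PK) (q := q) i.lt_succ_self
  exact heff PK q (i + 1) s hs (entails_box_of_box_mem hbox hqs)

theorem constant_refusal_general (htruth : Truthful Cens) (heff : Effective Cens)
    (hKB : L.Proves PK.KB (q i)) {s : L.Fml} (hs : s ∈ PK.Sec) (hqs : L.Proves {q i} s) :
    Cens PK q i = Ans.r :=
  (htruth.eq_t_or_eq_r hKB).resolve_left (heff.ne_t_of_proves_secret hs hqs)

end Censor

/-- For the privacy configuration ({S}, ∅, {S}) and the constant
query sequence (S, S, …), every continuous, truthful and effective censor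
answers constantly `r`. -/
theorem constant_refusal {L : Logic} (S : L.Fml)
    (hScons : ∃ A : L.Fml, ¬ L.Proves {S} A)
    (hw : ∃ w : Set L.Fml, ¬ L.Proves w S)
    (Cens : Censor L)
    (hcont : ContinuousCensor Cens) (htruth : Truthful Cens)
    (heff : Effective Cens)
    (PK : PrivacyConfig L)
    (hKB : PK.KB = {S}) (hAK : PK.AK = ∅) (hSec : PK.Sec = {S}) :
    ∀ i : ℕ, Cens PK (fun _ => S) i = Ans.r := fun _ =>
  constant_refusal_general htruth heff (hKB ▸ L.refl S) (hSec ▸ Set.mem_singleton S) (L.refl S)
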